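/- For every integer n ≥ 3 with n ≡ 0 (mod 3), h(n,4) = n. -/

import Mathlib

/-!
The upper bound is attained by disjoint triangles: paths have at most three vertices, and an
edge joining two triangles creates a path with degrees `2, 2, 3, 3`.

For the lower bound, a 4-saturated graph on at least three vertices has no isolated vertex and
at most one vertex of degree one, so its degree sum is at least `2 * n - 1`; being even, it is at
least `2 * n`. The facts on small degrees come from adding one suitable edge each time and
checking that no monotone path on four vertices arises. Let `x` be a vertex of maximum degree;
it has degree at least two (`Sat4.exists_two_le`).

* An isolated vertex could be joined to `x` (`Sat4.one_le`).
* A leaf `v` whose neighbour `u` has degree two and whose second-neighbour `a` has degree at most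
  two could be joined to `a` (`Sat4.no_pendant_path`).
* Hence a leaf not adjacent to `x` could be joined to `x` (`Sat4.leaf_adj`). So if there is a leaf,
  then its only neighbour `x` is the unique vertex of maximum degree.
* Two leaves, both attached to `x`, could be joined to each other (`Sat4.leaf_unique`).
-/

open SimpleGraph

variable {V : Type*}

/-- The degree of a vertex `v`: the number of neighbours of `v`. -/
noncomputable def gdeg (G : SimpleGraph V) (v : V) : ℕ := (G.neighborSet v).ncard

/-- A walk is degree monotone if the sequence of degrees of the vertices in the
order in which they appear on the walk is monotone (non-decreasing or non-increasing). -/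
def IsDegMonotone (G : SimpleGraph V) {u v : V} (p : G.Walk u v) : Prop :=
  (p.support.map (gdeg G)).Chain' (· ≤ ·) ∨ (p.support.map (gdeg G)).Chain' (· ≥ ·)

/-- `mp G` is the maximum number of vertices of a degree monotone path in `G`. -/
noncomputable def mp (G : SimpleGraph V) : ℕ :=
  sSup {n | ∃ (u v : V) (p : G.Walk u v), p.IsPath ∧ IsDegMonotone G p ∧ p.support.length = n}

/-- The graph obtained from `G` by adding the edge `uv`. -/
def addEdge (G : SimpleGraph V) (u v : V) : SimpleGraph V :=
  G ⊔ fromEdgeSet {s(u, v)}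

/-- `G` is saturated if adding any edge between non-adjacent vertices increases `mp`. -/
def Saturated (G : SimpleGraph V) : Prop :=
  ∀ u v : V, u ≠ v → ¬ G.Adj u v → mp G < mp (addEdge G u v)

/-- `G` is `k`-saturated if `mp G < k` and adding any edge between non-adjacent
vertices creates a degree monotone path on at least `k` vertices. -/
def KSaturated (k : ℕ) (G : SimpleGraph V) : Prop :=
  mp G < k ∧ ∀ u v : V, u ≠ v → ¬ G.Adj u v → k ≤ mp (addEdge G u v)

/-- `hSat n k` is the minimum number of edges of a `k`-saturated graph on `n` vertices. -/
noncomputable def hSat (n k : ℕ) : ℕ :=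
  sInf {m | ∃ G : SimpleGraph (Fin n), KSaturated k G ∧ G.edgeSet.ncard = m}

/-! ### Monotone paths on four vertices -/

/-- `G` has a path `a, b, c, d` on four vertices along which the degrees are non-decreasing. -/
def HasMonoPathFour (G : SimpleGraph V) : Prop :=
  ∃ a b c d : V, G.Adj a b ∧ G.Adj b c ∧ G.Adj c d ∧ a ≠ c ∧ a ≠ d ∧ b ≠ d ∧
    gdeg G a ≤ gdeg G b ∧ gdeg G b ≤ gdeg G c ∧ gdeg G c ≤ gdeg G d

/-- A monotone path on at least four vertices contains one on exactly four, and non-increasing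
paths become non-decreasing when reversed. -/
theorem four_le_mp_iff [Finite V] (G : SimpleGraph V) : 4 ≤ mp G ↔ HasMonoPathFour G := by
  classical
  have := Fintype.ofFinite V
  set S : Set ℕ := {n | ∃ (u v : V) (p : G.Walk u v), p.IsPath ∧ IsDegMonotone G p ∧
    p.support.length = n} with hS
  have hbdd : BddAbove S := by
    refine ⟨Fintype.card V, ?_⟩
    rintro m ⟨u, v, p, hp, -, rfl⟩
    exact hp.support_nodup.length_le_card
  constructor
  · intro h
    have hne : S.Nonempty := by
      by_contra hemp
      have h0 : mp G = 0 := by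
        change sSup S = 0
        rw [Set.not_nonempty_iff_eq_empty.mp hemp]
        simp
      omega
    obtain ⟨u, v, p, hp, hm, hl⟩ : mp G ∈ S := Nat.sSup_mem hne hbdd
    have hnd := hp.support_nodup
    have hch := p.isChain_adj_support
    unfold IsDegMonotone at hm
    rw [← hl] at h
    clear hl hp
    revert h hm hnd hch
    generalize p.support = l
    intro h hm hnd hch
    match l, h with
    | a :: b :: c :: d :: t, _ =>
      simp only [List.map_cons, List.Chain', List.isChain_cons_cons, List.nodup_cons,
        List.mem_cons, not_or] at hm hnd hch
      rcases hm with hm | hm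
      · exact ⟨a, b, c, d, by tauto⟩
      · exact ⟨d, c, b, a, hch.2.2.1.symm, hch.2.1.symm, hch.1.symm, by grind⟩
  · rintro ⟨a, b, c, d, hab, hbc, hcd, hac, had, hbd, h1, h2, h3⟩
    refine le_csSup hbdd ⟨a, d, .cons hab (.cons hbc (.cons hcd .nil)), ?_, ?_, ?_⟩
    · have := hab.ne; have := hbc.ne; have := hcd.ne
      simp [Walk.isPath_def]
      tauto
    · left
      simp [List.Chain', h1, h2, h3]
    · simp

/-! ### Adjacency and degrees after adding an edge -/

theorem addEdge_adj {G : SimpleGraph V} {u v : V} (huv : u ≠ v) (a b : V) :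
    (addEdge G u v).Adj a b ↔ G.Adj a b ∨ (a = u ∧ b = v) ∨ (a = v ∧ b = u) := by
  simp only [addEdge, sup_adj, fromEdgeSet_adj, Set.mem_singleton_iff, Sym2.eq_iff]
  grind

theorem gdeg_addEdge_left [Finite V] {G : SimpleGraph V} {u v : V} (huv : u ≠ v)
    (hn : ¬ G.Adj u v) : gdeg (addEdge G u v) u = gdeg G u + 1 := by
  have : (addEdge G u v).neighborSet u = insert v (G.neighborSet u) := by
    ext x
    simp only [mem_neighborSet, addEdge_adj huv, Set.mem_insert_iff]
    grind
  rw [gdeg, this, Set.ncard_insert_of_notMem (by simpa using hn)]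
  rfl

theorem addEdge_comm (G : SimpleGraph V) (u v : V) : addEdge G u v = addEdge G v u := by
  simp [addEdge, Sym2.eq_swap]

theorem gdeg_addEdge_right [Finite V] {G : SimpleGraph V} {u v : V} (huv : u ≠ v)
    (hn : ¬ G.Adj u v) : gdeg (addEdge G u v) v = gdeg G v + 1 := by
  rw [addEdge_comm]
  exact gdeg_addEdge_left huv.symm fun h => hn h.symm

theorem gdeg_addEdge_of_ne {G : SimpleGraph V} {u v w : V} (huv : u ≠ v)
    (hu : w ≠ u) (hv : w ≠ v) : gdeg (addEdge G u v) w = gdeg G w := by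
  have : (addEdge G u v).neighborSet w = G.neighborSet w := by
    ext x
    simp only [mem_neighborSet, addEdge_adj huv]
    grind
  rw [gdeg, this]
  rfl

theorem one_le_gdeg [Finite V] {G : SimpleGraph V} {v x : V} (hx : G.Adj v x) :
    1 ≤ gdeg G v := by
  have h : ({x} : Set V) ⊆ G.neighborSet v := by simpa using hx
  simpa [gdeg] using Set.ncard_le_ncard h

theorem two_le_gdeg [Finite V] {G : SimpleGraph V} {v x y : V} (hx : G.Adj v x)
    (hy : G.Adj v y) (hxy : x ≠ y) : 2 ≤ gdeg G v := by
  have h : ({x, y} : Set V) ⊆ G.neighborSet v := by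
    rintro z (rfl | rfl) <;> assumption
  simpa [gdeg, Set.ncard_pair hxy] using Set.ncard_le_ncard h

theorem three_le_gdeg [Finite V] {G : SimpleGraph V} {v x y z : V} (hx : G.Adj v x)
    (hy : G.Adj v y) (hz : G.Adj v z) (hxy : x ≠ y) (hxz : x ≠ z) (hyz : y ≠ z) :
    3 ≤ gdeg G v := by
  have h : ({x, y, z} : Set V) ⊆ G.neighborSet v := by
    rintro w (rfl | rfl | rfl) <;> assumption
  have h3 : ({x, y, z} : Set V).ncard = 3 :=
    Set.ncard_eq_three.mpr ⟨x, y, z, hxy, hxz, hyz, rfl⟩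
  simpa [gdeg, h3] using Set.ncard_le_ncard h

theorem exists_adj_of_gdeg [Finite V] {G : SimpleGraph V} {v : V} (h : 1 ≤ gdeg G v) :
    ∃ x, G.Adj v x :=
  Set.nonempty_of_ncard_ne_zero (s := G.neighborSet v) (by unfold gdeg at h; omega)

/-! ### Leaves in 4-saturated graphs -/

/-- Saturation for `k = 4`, expressed through four-vertex paths. -/
def Sat4 (G : SimpleGraph V) : Prop :=
  ¬ HasMonoPathFour G ∧ ∀ u v : V, u ≠ v → ¬ G.Adj u v → HasMonoPathFour (addEdge G u v)

theorem kSaturated_four_iff [Finite V] (G : SimpleGraph V) : KSaturated 4 G ↔ Sat4 G := by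
  simp only [KSaturated, Sat4, four_le_mp_iff, ← not_le]

/-- Not every degree is at most one: otherwise, after adding an edge, only its two ends have
degree at least two, while the last three vertices of a monotone four-vertex path all do. -/
theorem Sat4.exists_two_le [Fintype V] {G : SimpleGraph V} (hG : Sat4 G)
    (hV : 3 ≤ Fintype.card V) : ∃ x, 2 ≤ gdeg G x := by
  by_contra! h
  obtain ⟨p, q, r, hpq, hpr, hqr⟩ := Fintype.two_lt_card_iff.mp hV
  obtain ⟨s, hps, hns⟩ : ∃ s, p ≠ s ∧ ¬ G.Adj p s := by
    by_contra! hc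
    have := two_le_gdeg (hc q hpq) (hc r hpr) hqr
    have := h p
    omega
  obtain ⟨a, b, c, d, hab, hbc, hcd, hac, had, hbd, h1, h2, h3⟩ := hG.2 p s hps hns
  have hb := two_le_gdeg hab.symm hbc hac
  have key : ∀ w, 2 ≤ gdeg (addEdge G p s) w → w = p ∨ w = s := by
    intro w hw
    by_contra! hc
    rw [gdeg_addEdge_of_ne hps hc.1 hc.2] at hw
    have := h w
    omega
  have := key b hb
  have := key c (by omega)
  have := key d (by omega)
  have := hbc.ne
  have := hcd.ne
  grind

/-- There is no isolated vertex: joining one to a vertex of maximum degree creates no monotone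
path on four vertices. -/
theorem Sat4.one_le [Finite V] {G : SimpleGraph V} (hG : Sat4 G) {x : V}
    (hx : ∀ y, gdeg G y ≤ gdeg G x) (hx2 : 2 ≤ gdeg G x) (w : V) : 1 ≤ gdeg G w := by
  by_contra! hw
  have hw0 : ∀ y, ¬ G.Adj w y := fun y hy => by
    have := one_le_gdeg hy
    omega
  have hwx : w ≠ x := by rintro rfl; omega
  obtain ⟨a, b, c, d, hab, hbc, hcd, hac, had, hbd, h1, h2, h3⟩ := hG.2 w x hwx (hw0 x)
  have hdw := gdeg_addEdge_left hwx (hw0 x)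
  have hdx := gdeg_addEdge_right hwx (hw0 x)
  have hdo : ∀ y, y ≠ w → y ≠ x → _ := fun y => gdeg_addEdge_of_ne (G := G) (w := y) hwx
  have hle : ∀ y, y ≠ x → gdeg (addEdge G w x) y ≤ gdeg G x := fun y hy => by
    rcases eq_or_ne y w with rfl | hyw
    · omega
    · rw [hdo y hyw hy]; exact hx y
  have nw : ∀ y, (addEdge G w x).Adj w y → y = x := fun y hy => by
    rw [addEdge_adj hwx] at hy
    have := hw0 y
    grind
  -- `x` has the strictly largest degree in the new graph, so it can only be the last vertex
  have hax : a ≠ x := by rintro rfl; have := hle b hab.ne'; omega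
  have hbx : b ≠ x := by rintro rfl; have := hle c hbc.ne'; omega
  have hcx : c ≠ x := by rintro rfl; have := hle d hcd.ne'; omega
  have haw : a ≠ w := by rintro rfl; exact hbx (nw b hab)
  have hbw : b ≠ w := by rintro rfl; exact hcx (nw c hbc)
  have hcw : c ≠ w := by rintro rfl; exact hbx (nw b hbc.symm)
  have hdw : d ≠ w := by rintro rfl; exact hcx (nw c hcd.symm)
  rw [hdo a haw hax, hdo b hbw hbx] at h1
  rw [hdo b hbw hbx, hdo c hcw hcx] at h2
  have h3' : gdeg G c ≤ gdeg G d := by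
    rcases eq_or_ne d x with rfl | hdx
    · exact hx c
    · rwa [hdo c hcw hcx, hdo d hdw hdx] at h3
  rw [addEdge_adj hwx] at hab hbc hcd
  exact hG.1 ⟨a, b, c, d, by tauto, by tauto, by tauto, hac, had, hbd, h1, h2, h3'⟩

/-- A leaf `v` whose neighbour `u` has degree two cannot have its second-neighbour `a` of degree
at most two: joining `v` to `a` would create no monotone path on four vertices. -/
theorem Sat4.no_pendant_path [Finite V] {G : SimpleGraph V} (hG : Sat4 G) {v u a : V}
    (hvu : G.Adj v u) (hua : G.Adj u a) (hva : v ≠ a) (hv : gdeg G v = 1)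
    (hu : gdeg G u ≤ 2) (ha : gdeg G a ≤ 2) : False := by
  have nv : ∀ y, G.Adj v y → y = u := fun y hy => by
    by_contra hne
    have := two_le_gdeg hy hvu hne
    omega
  have nu : ∀ y, G.Adj u y → y = v ∨ y = a := fun y hy => by
    by_contra! hne
    have := three_le_gdeg hy hvu.symm hua hne.1 hne.2 hva
    omega
  have na1 : ∀ y, G.Adj a y → y ≠ u → gdeg G a = 2 := fun y hy h1 => by
    have := two_le_gdeg hy hua.symm h1
    omega
  have hu2 : gdeg G u = 2 := by
    have := two_le_gdeg hvu.symm hua hva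
    omega
  have hnva : ¬ G.Adj v a := fun h => hua.ne (nv a h).symm
  obtain ⟨p, q, r, s, hpq, hqr, hrs, hpr, hps, hqs, h1, h2, h3⟩ := hG.2 v a hva hnva
  have hdv := gdeg_addEdge_left hva hnva
  have hda := gdeg_addEdge_right hva hnva
  have hdo : ∀ y, y ≠ v → y ≠ a → _ := fun y => gdeg_addEdge_of_ne (G := G) (w := y) hva
  have hn : ∀ p q r s : V, G.Adj p q → G.Adj q r → G.Adj r s → p ≠ r → p ≠ s → q ≠ s →
    gdeg G p ≤ gdeg G q → gdeg G q ≤ gdeg G r → gdeg G r ≤ gdeg G s → False := 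
    fun p q r s h1 h2 h3 h4 h5 h6 h7 h8 h9 => hG.1 ⟨p, q, r, s, h1, h2, h3, h4, h5, h6, h7, h8, h9⟩
  have hdu := hdo u hvu.ne' hua.ne
  -- a neighbour of `a` other than `u` has degree at most one
  have hb : ∀ y, G.Adj a y → y ≠ u → gdeg G y ≤ 1 := by
    intro y hy hyu
    by_contra! hc
    refine hn v u a y hvu hua hy hva ?_ hyu.symm (by omega) ?_ ?_
    · rintro rfl; exact hnva hy.symm
    · have := na1 y hy hyu; omega
    · have := na1 y hy hyu; omega
  have nv' : ∀ y, (addEdge G v a).Adj v y → y = u ∨ y = a := fun y hy => by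
    rw [addEdge_adj hva] at hy
    have := nv y
    grind
  have nu' : ∀ y, (addEdge G v a).Adj u y → y = v ∨ y = a := fun y hy => by
    rw [addEdge_adj hva] at hy
    have := nu y
    have := hvu.ne'
    have := hua.ne
    grind
  have na' : ∀ y, (addEdge G v a).Adj a y →
      y = u ∨ y = v ∨ (gdeg G a = 2 ∧ gdeg (addEdge G v a) y ≤ 1) := fun y hy => by
    rw [addEdge_adj hva] at hy
    by_cases hyu : y = u
    · exact .inl hyu
    by_cases hyv : y = v
    · exact .inr (.inl hyv)
    have hy' : G.Adj a y := by tauto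
    rw [hdo y hyv hy'.ne']
    exact .inr (.inr ⟨na1 y hy' hyu, hb y hy' hyu⟩)
  have hpq' := hpq.symm; have hqr' := hqr.symm; have hrs' := hrs.symm
  have := hpq.ne; have := hqr.ne; have := hrs.ne
  have hr2 := two_le_gdeg hqr' hrs hqs
  clear hn hb na1 nu nv
  -- in the new graph `v`, `u`, `a` form a triangle that a path can only leave through `a`
  have hpa : p ≠ a := by
    rintro rfl
    have := nu' r; have := nv' r; have := nu' s; have := nv' s
    rcases na' q hpq with h | h | h <;> grind
  have hqa : q ≠ a := by
    rintro rfl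
    have := nu' s; have := nv' s
    rcases na' r hqr with h | h | h <;> rcases na' p hpq' with h' | h' | h' <;> grind
  have hra : r ≠ a := by
    rintro rfl
    have := nu' p; have := nv' p
    rcases na' s hrs with h | h | h <;> rcases na' q hqr' with h' | h' | h' <;> grind
  have hsa : s ≠ a := by
    rintro rfl
    have := nu' p; have := nv' p; have := nu' q; have := nv' q
    rcases na' r hrs' with h | h | h <;> grind
  have hqv : q ≠ v := by
    have := nv' p; have := nv' r
    grind
  have hrv : r ≠ v := by
    have := nv' q; have := nv' s
    grind
  have hpv : p ≠ v := by
    have := nv' q; have := nu' r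
    grind
  have hsv : s ≠ v := by
    have := nv' r; have := nu' q
    grind
  rw [hdo p hpv hpa, hdo q hqv hqa] at h1
  rw [hdo q hqv hqa, hdo r hrv hra] at h2
  rw [hdo r hrv hra, hdo s hsv hsa] at h3
  rw [addEdge_adj hva] at hpq hqr hrs
  exact hG.1 ⟨p, q, r, s, by tauto, by tauto, by tauto, hpr, hps, hqs, h1, h2, h3⟩

/-- Every leaf `v` is adjacent to every vertex `x` of maximum degree. Otherwise join them: `x`
can only be the last vertex of the resulting path, and the path avoids being monotone in `G`
only if `v` starts a path of the kind excluded by `Sat4.no_pendant_path`. -/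
theorem Sat4.leaf_adj [Finite V] {G : SimpleGraph V} (hG : Sat4 G) {x v : V}
    (hx : ∀ y, gdeg G y ≤ gdeg G x) (hx2 : 2 ≤ gdeg G x) (hv : gdeg G v = 1) : G.Adj v x := by
  by_contra hnvx
  have hvx : v ≠ x := by rintro rfl; omega
  obtain ⟨u, hvu⟩ := exists_adj_of_gdeg hv.ge
  have nv : ∀ y, G.Adj v y → y = u := fun y hy => by
    by_contra hne
    have := two_le_gdeg hy hvu hne
    omega
  have hno : ∀ a, G.Adj u a → v ≠ a → gdeg G u ≤ 2 → gdeg G a ≤ 2 → False :=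
    fun a h1 h2 h3 h4 => hG.no_pendant_path hvu h1 h2 hv h3 h4
  obtain ⟨a, b, c, d, hab, hbc, hcd, hac, had, hbd, h1, h2, h3⟩ := hG.2 v x hvx hnvx
  have hdv := gdeg_addEdge_left hvx hnvx
  have hdx := gdeg_addEdge_right hvx hnvx
  have hdo : ∀ y, y ≠ v → y ≠ x → _ := fun y => gdeg_addEdge_of_ne (G := G) (w := y) hvx
  have hle : ∀ y, y ≠ x → gdeg (addEdge G v x) y ≤ gdeg G x := fun y hy => by
    rcases eq_or_ne y v with rfl | hyv
    · omega
    · rw [hdo y hyv hy]; exact hx y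
  have nv' : ∀ y, (addEdge G v x).Adj v y → y ≠ x → y = u := fun y hy hyx => by
    rw [addEdge_adj hvx] at hy
    have := nv y
    grind
  have old : ∀ y z, (addEdge G v x).Adj y z → y ≠ x → (z ≠ x ∨ y ≠ v) → G.Adj y z := by
    intro y z hyz
    rw [addEdge_adj hvx] at hyz
    tauto
  -- `x` has the strictly largest degree in the new graph, so it can only be the last vertex
  have hax : a ≠ x := by rintro rfl; have := hle b hab.ne'; omega
  have hbx : b ≠ x := by rintro rfl; have := hle c hbc.ne'; omega
  have hcx : c ≠ x := by rintro rfl; have := hle d hcd.ne'; omega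
  have hbv : b ≠ v := by
    rintro rfl
    exact hac ((nv' a hab.symm hax).trans (nv' c hbc hcx).symm)
  have hcv : c ≠ v := by
    rintro rfl
    obtain rfl := nv' b hbc.symm hbx
    refine hno a (old a b hab hax (.inl hbx)).symm hac.symm ?_ ?_
    · have := hdo b hbv hbx; omega
    · have := hdo a hac hax; omega
  have hdv' : d ≠ v := by
    rintro rfl
    obtain rfl := nv' c hcd.symm hcx
    refine hno b (old b c hbc hbx (.inl hcx)).symm hbd.symm ?_ ?_
    · have := hdo c hcv hcx; omega
    · have := hdo b hbv hbx; omega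
  have hab' := old a b hab hax (.inl hbx)
  have h1' : gdeg G a ≤ gdeg G b := by
    rcases eq_or_ne a v with rfl | hav
    · rw [hv]; exact one_le_gdeg hab'.symm
    · rwa [hdo a hav hax, hdo b hbv hbx] at h1
  rw [hdo b hbv hbx, hdo c hcv hcx] at h2
  have h3' : gdeg G c ≤ gdeg G d := by
    rcases eq_or_ne d x with rfl | hdx
    · exact hx c
    · rwa [hdo c hcv hcx, hdo d hdv' hdx] at h3
  exact hG.1 ⟨a, b, c, d, hab', old b c hbc hbx (.inr hbv), old c d hcd hcx (.inr hcv),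
    hac, had, hbd, h1', h2, h3'⟩

/-- There is at most one leaf: joining two leaves attached to the unique vertex of maximum
degree creates no monotone path on four vertices. -/
theorem Sat4.leaf_unique [Finite V] {G : SimpleGraph V} (hG : Sat4 G) {x v w : V}
    (hx : ∀ y, gdeg G y ≤ gdeg G x) (hx2 : 2 ≤ gdeg G x) (hv : gdeg G v = 1)
    (hw : gdeg G w = 1) : v = w := by
  by_contra hvw
  have hvx := hG.leaf_adj hx hx2 hv
  have hwx := hG.leaf_adj hx hx2 hw
  have nv : ∀ y, G.Adj v y → y = x := fun y hy => by
    by_contra hne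
    have := two_le_gdeg hy hvx hne
    omega
  have nw : ∀ y, G.Adj w y → y = x := fun y hy => by
    by_contra hne
    have := two_le_gdeg hy hwx hne
    omega
  have hux : ∀ y, gdeg G x ≤ gdeg G y → y = x := fun y hy =>
    nv y (hG.leaf_adj (fun z => (hx z).trans hy) (hx2.trans hy) hv)
  have nx : ∀ y, G.Adj x y → y ≠ v → y ≠ w → 3 ≤ gdeg G x := fun y hy h1 h2 =>
    three_le_gdeg hy hvx.symm hwx.symm h1 h2 hvw
  have hnvw : ¬ G.Adj v w := fun h => hwx.ne (nv w h)
  obtain ⟨a, b, c, d, hab, hbc, hcd, hac, had, hbd, h1, h2, h3⟩ := hG.2 v w hvw hnvw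
  have hdv := gdeg_addEdge_left hvw hnvw
  have hdw := gdeg_addEdge_right hvw hnvw
  have hdo : ∀ y, y ≠ v → y ≠ w → _ := fun y => gdeg_addEdge_of_ne (G := G) (w := y) hvw
  have nv' : ∀ y, (addEdge G v w).Adj v y → y = x ∨ y = w := fun y hy => by
    rw [addEdge_adj hvw] at hy
    have := nv y
    grind
  have nw' : ∀ y, (addEdge G v w).Adj w y → y = x ∨ y = v := fun y hy => by
    rw [addEdge_adj hvw] at hy
    have := nw y
    grind
  have old : ∀ y z, (addEdge G v w).Adj y z → (y ≠ v ∧ y ≠ w) → G.Adj y z := by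
    intro y z hyz
    rw [addEdge_adj hvw] at hyz
    tauto
  have hxv := hvx.ne'
  have hxw := hwx.ne'
  have hdx := hdo x hxv hxw
  have hlt : ∀ y, y = x ∨ y = v ∨ y = w ∨ gdeg (addEdge G v w) y < gdeg G x := by
    intro y
    by_contra! h
    obtain ⟨h1, h2, h3, h4⟩ := h
    rw [hdo y h2 h3] at h4
    exact h1 (hux y h4)
  have nx' : ∀ y, (addEdge G v w).Adj x y → y = v ∨ y = w ∨ 3 ≤ gdeg G x := by
    intro y hy
    by_contra! h
    have := nx y (old x y hy ⟨hxv, hxw⟩) h.1 h.2.1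
    omega
  have := hab.ne; have := hbc.ne; have := hcd.ne
  -- if `x` is not the last vertex, its successor has degree at least that of `x` and so is `v`
  -- or `w`; then `x` has degree two in `G`, and `v`, `w`, `x` form a whole component
  have hax : a ≠ x := by
    rintro rfl
    have := nv' c; have := nw' c; have := nv' d; have := nw' d
    rcases hlt b with h | h | h | h <;> grind
  have hbx : b ≠ x := by
    rintro rfl
    have := nv' d; have := nw' d
    rcases hlt c with h | h | h | h <;> rcases nx' a hab.symm with h' | h' | h' <;> grind
  have hcx : c ≠ x := by
    rintro rfl
    have := nv' a; have := nw' a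
    have := hab.symm
    rcases hlt d with h | h | h | h <;> rcases nx' b hbc.symm with h' | h' | h' <;> grind
  have hab_symm := hab.symm
  have hbc_symm := hbc.symm
  have hcv : c ≠ v := by
    have := nv' b; have := nw' a
    grind
  have hcw : c ≠ w := by
    have := nw' b; have := nv' a
    grind
  have hbv : b ≠ v := by
    have := nv' c
    grind
  have hbw : b ≠ w := by
    have := nw' c
    grind
  have hav : a ≠ v := by
    have := nv' b
    grind
  have haw : a ≠ w := by
    have := nw' b
    grind
  have hdv' : d ≠ v := by
    have := nv' c; have := hcd.symm
    grind
  have hdw' : d ≠ w := by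
    have := nw' c; have := hcd.symm
    grind
  rw [hdo a hav haw, hdo b hbv hbw] at h1
  rw [hdo b hbv hbw, hdo c hcv hcw] at h2
  rw [hdo c hcv hcw, hdo d hdv' hdw'] at h3
  exact hG.1 ⟨a, b, c, d, old a b hab ⟨hav, haw⟩, old b c hbc ⟨hbv, hbw⟩,
    old c d hcd ⟨hcv, hcw⟩, hac, had, hbd, h1, h2, h3⟩

/-! ### The lower bound -/

theorem sum_gdeg [Fintype V] (G : SimpleGraph V) : ∑ v, gdeg G v = 2 * G.edgeSet.ncard := by
  classical
  have h1 : ∀ v, gdeg G v = G.degree v := fun v => by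
    rw [gdeg, Set.ncard_eq_toFinset_card', ← G.card_neighborFinset_eq_degree]
    rfl
  rw [Set.ncard_eq_toFinset_card', ← edgeFinset, ← G.sum_degrees_eq_twice_card_edges]
  exact Finset.sum_congr rfl fun v _ => h1 v

/-- All degrees are at least two, except possibly for a single leaf, so twice the number of edges
is at least `2 * |V| - 1`. -/
theorem Sat4.card_le [Fintype V] {G : SimpleGraph V} (hG : Sat4 G)
    (hV : 3 ≤ Fintype.card V) : Fintype.card V ≤ G.edgeSet.ncard := by
  classical
  obtain ⟨y, hy⟩ := hG.exists_two_le hV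
  have : Nonempty V := ⟨y⟩
  obtain ⟨x, hx⟩ := Finite.exists_max (gdeg G)
  have hx2 : 2 ≤ gdeg G x := hy.trans (hx y)
  have hsum : ∑ v : V, 2 ≤ ∑ v, (gdeg G v + if gdeg G v = 1 then 1 else 0) :=
    Finset.sum_le_sum fun v _ => by
      have := hG.one_le hx hx2 v
      split_ifs <;> omega
  have hleaf : (Finset.univ.filter fun v => gdeg G v = 1).card ≤ 1 :=
    Finset.card_le_one.mpr fun v hv w hw =>
      hG.leaf_unique hx hx2 (by simpa using hv) (by simpa using hw)
  rw [Finset.sum_add_distrib, sum_gdeg, Finset.sum_boole] at hsum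
  simp at hsum
  omega

/-! ### Disjoint triangles -/

/-- The disjoint union of triangles on consecutive triples `{3q, 3q + 1, 3q + 2}`. -/
def triangles (n : ℕ) : SimpleGraph (Fin n) where
  Adj a b := a ≠ b ∧ a.val / 3 = b.val / 3
  symm := ⟨fun _ _ h => ⟨h.1.symm, h.2.symm⟩⟩
  loopless := ⟨fun _ h => h.1 rfl⟩

/-- Since `3 ∣ n`, the block of `u` contains two further vertices. -/
theorem exists_triangle {n : ℕ} (hmod : n % 3 = 0) (u : Fin n) :
    ∃ p q : Fin n, p ≠ q ∧ p ≠ u ∧ q ≠ u ∧ p.val / 3 = u.val / 3 ∧ q.val / 3 = u.val / 3 := by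
  have := u.isLt
  refine ⟨⟨3 * (u.val / 3) + (u.val + 1) % 3, by omega⟩,
    ⟨3 * (u.val / 3) + (u.val + 2) % 3, by omega⟩, ?_⟩
  simp only [ne_eq, Fin.ext_iff]
  omega

theorem gdeg_triangles {n : ℕ} (hmod : n % 3 = 0) (u : Fin n) : gdeg (triangles n) u = 2 := by
  obtain ⟨p, q, hpq, hp, hq, h1, h2⟩ := exists_triangle hmod u
  have : (triangles n).neighborSet u = {p, q} := by
    ext x
    simp only [mem_neighborSet, triangles, Set.mem_insert_iff, Set.mem_singleton_iff, ne_eq,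
      Fin.ext_iff] at *
    omega
  rw [gdeg, this, Set.ncard_pair hpq]

/-- Components have three vertices, so no path has four. An edge `uv` between two triangles
creates the path `p, q, u, v` with degrees `2, 2, 3, 3`, where `p, q` complete the triangle
of `u`. -/
theorem sat4_triangles {n : ℕ} (hmod : n % 3 = 0) : Sat4 (triangles n) := by
  constructor
  · rintro ⟨a, b, c, d, hab, hbc, hcd, hac, had, hbd, -⟩
    simp only [triangles, ne_eq, Fin.ext_iff] at *
    omega
  · intro u v huv hn
    obtain ⟨p, q, hpq, hp, hq, h1, h2⟩ := exists_triangle hmod u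
    have hblock : u.val / 3 ≠ v.val / 3 := fun h => hn ⟨huv, h⟩
    have hpv : p ≠ v := by rintro rfl; omega
    have hqv : q ≠ v := by rintro rfl; omega
    refine ⟨p, q, u, v, ?_, ?_, ?_, hp, hpv, hqv, ?_⟩
    · exact (addEdge_adj huv _ _).mpr (.inl ⟨hpq, by omega⟩)
    · exact (addEdge_adj huv _ _).mpr (.inl ⟨hq, by omega⟩)
    · exact (addEdge_adj huv _ _).mpr (.inr (.inl ⟨rfl, rfl⟩))
    · rw [gdeg_addEdge_left huv hn, gdeg_addEdge_right huv hn, gdeg_addEdge_of_ne huv hp hpv,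
        gdeg_addEdge_of_ne huv hq hqv]
      simp [gdeg_triangles hmod]

theorem stmt_17 (n : ℕ) (hn : 3 ≤ n) (hmod : n % 3 = 0) : hSat n 4 = n := by
  have hmem : n ∈ {m | ∃ G : SimpleGraph (Fin n), KSaturated 4 G ∧ G.edgeSet.ncard = m} := by
    refine ⟨triangles n, (kSaturated_four_iff _).mpr (sat4_triangles hmod), ?_⟩
    have := sum_gdeg (triangles n)
    simp [gdeg_triangles hmod] at this
    omega
  refine le_antisymm (Nat.sInf_le hmem) (le_csInf ⟨n, hmem⟩ ?_)
  rintro m ⟨G, hG, rfl⟩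
  simpa using ((kSaturated_four_iff G).mp hG).card_le (by simpa using hn)
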